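/- arXiv:1704.04389 — 8 statements merged into one kernel-verified Lean document; each statement's English description precedes it below -/
import Mathlib

section
/- Let ā ∈ {0,1}^{n} and b̄ ∈ {0,1}^{n'} be binary sequences, let t be a natural number with t ≤ n and t ≤ n', suppose ā is top t sorted, b̄ is top t sorted, and |ā|₁ ≥ |b̄|₁. Then for every j with 1 ≤ j ≤ t, if b_j = 1 then a_j = 1. -/
/-!
If `c ≤ b j`, then `b` meets the threshold `c` at all of the positions `0, …, j`, that is, at least
`j + 1` times. So does `a`, hence `a` meets it at some position `i ≥ j`; as position `j < t` of a
top `t` sorted sequence dominates every later one, `c ≤ a i ≤ a j`. For binary sequences take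
`c = 1`.
-/

open scoped Finset

section Counting

variable {n : ℕ} {p : Fin n → Prop} [DecidablePred p] {k : Fin n}

theorem lt_card_filter_of_forall_le (h : ∀ i ≤ k, p i) : (k : ℕ) < #{i | p i} := by
  have initial_subset : Finset.Iic k ⊆ ({i | p i} : Finset (Fin n)) := fun i hi =>
    Finset.mem_filter_univ i |>.mpr (h i (Finset.mem_Iic.mp hi))
  calc (k : ℕ) < k + 1 := Nat.lt_succ_self k
    _ = #(Finset.Iic k) := (Fin.card_Iic k).symm
    _ ≤ #{i | p i} := Finset.card_le_card initial_subset

theorem exists_ge_of_lt_card_filter (h : (k : ℕ) < #{i | p i}) : ∃ i ≥ k, p i := by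
  have card_lt : #(Finset.Iio k) < #{i | p i} := by rwa [Fin.card_Iio]
  obtain ⟨i, hpi, hik⟩ := Finset.exists_mem_notMem_of_card_lt_card card_lt
  exact ⟨i, by simpa using hik, by simpa using hpi⟩

end Counting

section TopSorted

variable {α : Type*} [Preorder α] {n : ℕ}

/-- A sequence is top `t` sorted if its first `t` entries are nonincreasing and each of them
dominates every entry after the first `t`, as for the output of a network selecting the `t` largest
entries. Positions are numbered from `0`, so the first `t` are those with `i < t`. -/
structure IsTopSorted (t : ℕ) (a : Fin n → α) : Prop where
  antitoneOn_prefix : AntitoneOn a {i | (i : ℕ) < t}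
  suffix_le_prefix : ∀ i j : Fin n, (i : ℕ) < t → t ≤ (j : ℕ) → a j ≤ a i

variable {n' t : ℕ} {a : Fin n → α} {b : Fin n' → α}

theorem IsTopSorted.apply_le_apply (ha : IsTopSorted t a) {i j : Fin n} (hi : (i : ℕ) < t)
    (hij : i ≤ j) : a j ≤ a i := by
  rcases lt_or_ge (j : ℕ) t with hj | hj
  · exact ha.antitoneOn_prefix hi hj hij
  · exact ha.suffix_le_prefix i j hi hj

theorem top_sorted_pointwise_domination_general {c : α} [DecidablePred (c ≤ ·)]
    (htn : t ≤ n) (htn' : t ≤ n') (ha : IsTopSorted t a)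
    (hb : AntitoneOn b {i | (i : ℕ) < t}) (hcnt : #{i | c ≤ b i} ≤ #{i | c ≤ a i})
    {j : ℕ} (hj : j < t) (hbj : c ≤ b ⟨j, hj.trans_le htn'⟩) :
    c ≤ a ⟨j, hj.trans_le htn⟩ := by
  have lt_card_b : j < #{i | c ≤ b i} :=
    lt_card_filter_of_forall_le (k := ⟨j, hj.trans_le htn'⟩) fun i hij =>
      hbj.trans (hb ((Fin.le_def.mp hij).trans_lt hj) hj hij)
  obtain ⟨i, hji, hai⟩ : ∃ i ≥ ⟨j, hj.trans_le htn⟩, c ≤ a i :=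
    exists_ge_of_lt_card_filter (lt_card_b.trans_le hcnt)
  exact hai.trans (ha.apply_le_apply hj hji)

end TopSorted

/-- If `a` and `b` are binary sequences that are top `t` sorted (their length-`t`
prefixes are nonincreasing and dominate the respective suffixes) and `a` has at
least as many ones as `b`, then the prefix of `a` pointwise dominates the prefix
of `b`: for every position `j < t`, if `b` has a one there then so does `a`. -/
theorem top_sorted_pointwise_domination (n n' t : ℕ)
    (a : Fin n → Bool) (b : Fin n' → Bool)
    (htn : t ≤ n) (htn' : t ≤ n')
    (ha1 : ∀ i j : Fin n, i ≤ j → (j : ℕ) < t → a j ≤ a i)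
    (ha2 : ∀ i j : Fin n, (i : ℕ) < t → t ≤ (j : ℕ) → a j ≤ a i)
    (hb1 : ∀ i j : Fin n', i ≤ j → (j : ℕ) < t → b j ≤ b i)
    (hb2 : ∀ i j : Fin n', (i : ℕ) < t → t ≤ (j : ℕ) → b j ≤ b i)
    (hcnt : (Finset.univ.filter (fun i : Fin n' => b i = true)).card ≤
            (Finset.univ.filter (fun i : Fin n => a i = true)).card) :
    ∀ j : ℕ, (hj : j < t) → b ⟨j, lt_of_lt_of_le hj htn'⟩ = true →
      a ⟨j, lt_of_lt_of_le hj htn⟩ = true := by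
  intro j hj
  simpa [Bool.le_iff_imp] using top_sorted_pointwise_domination_general (c := true) htn htn'
    ⟨fun i _ k hk hik => ha1 i k hik hk, ha2⟩ (fun i _ k hk hik => hb1 i k hik hk)
    (by simpa [Bool.le_iff_imp] using hcnt) hj
end

section
/- Let m ≥ 1 and k ≥ 1 be natural numbers, let n₁ ≥ n₂ ≥ … ≥ n_m ≥ 1 be natural numbers, and set l_i = min(n_i, ⌊k/i⌋) for 1 ≤ i ≤ m. Let z¹, …, z^m be binary sequences with z^i ∈ {0,1}^{n_i}, such that each z^i is top l_i sorted and |z¹|₁ ≥ |z²|₁ ≥ … ≥ |z^m|₁. Then Σ_{i=1}^{m} |pref(l_i, z^i)|₁ ≥ min(k, Σ_{i=1}^{m} |z^i|₁); that is, the concatenation of the prefixes pref(l₁,z¹) :: … :: pref(l_m,z^m) contains the k largest elements of z¹ :: … :: z^m. -/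
/-!
Write `cᵢ` for the number of ones in `zⁱ`. A prefix of length `lᵢ` consisting only of ones contains
`lᵢ` of them; if it contains a zero, then, `zⁱ` being top `lᵢ` sorted, no ones follow the prefix
and it contains all `cᵢ`. Since `cᵢ ≤ nᵢ`, we have `min lᵢ cᵢ = min ⌊k/i⌋ cᵢ`, so it suffices to
show `min k (∑ cᵢ) ≤ ∑ min ⌊k/i⌋ cᵢ`.

If every `cᵢ` is at most `⌊k/i⌋`, the right-hand side is `∑ cᵢ`. Otherwise let `t` be the first
index with `⌊k/t⌋ < c_t`. Each of the `t - 1` terms before `t` is some `cᵢ ≥ c_t ≥ ⌊k/t⌋ + 1`, and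
term `t` is `⌊k/t⌋`, so the sum is at least `t (⌊k/t⌋ + 1) - 1 ≥ k`.
-/

open Finset

theorem min_card_filter_le_card_filter_and {α : Type*} (s : Finset α) (p q : α → Prop)
    [DecidablePred p] [DecidablePred q]
    (h : ∀ a ∈ s, ∀ b ∈ s, p a → ¬ p b → q b → q a) :
    min #{a ∈ s | p a} #{a ∈ s | q a} ≤ #{a ∈ s | p a ∧ q a} := by
  by_cases hpq : ∀ a ∈ s, p a → q a
  · refine (min_le_left _ _).trans (card_le_card ?_)
    exact monotone_filter_right s fun a ha hp => ⟨hp, hpq a ha hp⟩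
  · push Not at hpq
    obtain ⟨a, ha, hpa, hqa⟩ := hpq
    have hqp : ∀ b ∈ s, q b → p b := fun b hb hqb =>
      by_contra fun hpb => hqa (h a ha b hb hpa hpb hqb)
    refine (min_le_right _ _).trans (card_le_card ?_)
    exact monotone_filter_right s fun b hb hq => ⟨hqp b hb hq, hq⟩

theorem min_card_ones_le_card_prefix_ones {n l : ℕ} (z : Fin n → Bool)
    (htop : ∀ p q : Fin n, (p : ℕ) < l → l ≤ (q : ℕ) → z q ≤ z p) :
    min l #{t | z t = true} ≤ #{t : Fin n | (t : ℕ) < l ∧ z t = true} := by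
  have hones : #{t | z t = true} ≤ n := card_finset_fin_le _
  have hcount := min_card_filter_le_card_filter_and univ (fun t : Fin n => (t : ℕ) < l)
    (fun t => z t = true) fun p _ q _ hp hq => htop p q hp (not_lt.mp hq)
  rw [Fin.card_filter_val_lt] at hcount
  omega

theorem le_sum_min_div_of_div_lt {m k : ℕ} {c : Fin m → ℕ} (hc : Antitone c) {t : Fin m}
    (hlt : k / ((t : ℕ) + 1) < c t) (hle : ∀ i < t, c i ≤ k / ((i : ℕ) + 1)) :
    k ≤ ∑ i : Fin m, min (k / ((i : ℕ) + 1)) (c i) := by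
  set d := k / ((t : ℕ) + 1)
  have hbefore : t * (d + 1) ≤ ∑ i ∈ Iio t, min (k / ((i : ℕ) + 1)) (c i) := by
    rw [← Fin.card_Iio t, ← smul_eq_mul]
    refine card_nsmul_le_sum _ _ _ fun i hi => ?_
    have hit : i < t := mem_Iio.mp hi
    rw [min_eq_right (hle i hit)]
    exact hlt.trans_le (hc hit.le)
  have hk : k < (t + 1) * (d + 1) := Nat.lt_mul_div_succ k t.val.succ_pos
  calc k ≤ d + t * (d + 1) := by linarith
    _ ≤ min d (c t) + ∑ i ∈ Iio t, min (k / ((i : ℕ) + 1)) (c i) :=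
      add_le_add (le_min le_rfl hlt.le) hbefore
    _ = ∑ i ∈ insert t (Iio t), min (k / ((i : ℕ) + 1)) (c i) := by
      rw [sum_insert notMem_Iio_self]
    _ ≤ ∑ i : Fin m, min (k / ((i : ℕ) + 1)) (c i) := sum_le_sum_of_subset (subset_univ _)

theorem min_sum_le_sum_min_div {m : ℕ} (k : ℕ) {c : Fin m → ℕ} (hc : Antitone c) :
    min k (∑ i, c i) ≤ ∑ i : Fin m, min (k / ((i : ℕ) + 1)) (c i) := by
  by_cases hsmall : ∀ i : Fin m, c i ≤ k / ((i : ℕ) + 1)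
  · exact (min_le_right _ _).trans (sum_le_sum fun i _ => le_min (hsmall i) le_rfl)
  · push Not at hsmall
    obtain ⟨t, ht⟩ := exists_minimal_of_wellFoundedLT _ hsmall
    exact (min_le_left _ _).trans <|
      le_sum_min_div_of_div_lt hc ht.prop fun i hi => not_lt.mp (ht.not_prop_of_lt hi)

theorem mwise_prefixes_contain_top_k_general {m k : ℕ} {n l : Fin m → ℕ}
    (hl : ∀ i : Fin m, min (n i) (k / ((i : ℕ) + 1)) ≤ l i)
    (z : (i : Fin m) → Fin (n i) → Bool)
    (htop : ∀ i : Fin m, ∀ p q : Fin (n i), (p : ℕ) < l i → l i ≤ (q : ℕ) → z i q ≤ z i p)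
    (hcnt : Antitone fun i => #{t | z i t = true}) :
    min k (∑ i, #{t | z i t = true}) ≤
      ∑ i, #{t : Fin (n i) | (t : ℕ) < l i ∧ z i t = true} := by
  refine (min_sum_le_sum_min_div k hcnt).trans (sum_le_sum fun i _ => ?_)
  have hones : #{t | z i t = true} ≤ n i := card_finset_fin_le _
  calc min (k / ((i : ℕ) + 1)) #{t | z i t = true}
      ≤ min (l i) #{t | z i t = true} := by have := hl i; omega
    _ ≤ #{t : Fin (n i) | (t : ℕ) < l i ∧ z i t = true} :=
      min_card_ones_le_card_prefix_ones (z i) (htop i)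

/-- Counting core of Theorem 1 (m-Wise Selection Network): with `lᵢ = min(nᵢ, ⌊k/i⌋)`,
if each binary sequence `zⁱ ∈ {0,1}^{nᵢ}` is top `lᵢ` sorted and the numbers of ones
in `z¹, …, z^m` are nonincreasing, then the prefixes `pref(lᵢ, zⁱ)` jointly contain
the `k` largest elements: the total number of ones in the prefixes is at least
`min(k, total number of ones)`. -/
theorem mwise_prefixes_contain_top_k (m k : ℕ) (hm : 1 ≤ m) (hk : 1 ≤ k)
    (n : Fin m → ℕ) (hn1 : ∀ i, 1 ≤ n i)
    (hmono : ∀ i j : Fin m, i ≤ j → n j ≤ n i)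
    (l : Fin m → ℕ) (hl : ∀ i : Fin m, l i = min (n i) (k / ((i : ℕ) + 1)))
    (z : (i : Fin m) → Fin (n i) → Bool)
    (htop1 : ∀ i : Fin m, ∀ p q : Fin (n i), p ≤ q → (q : ℕ) < l i → z i q ≤ z i p)
    (htop2 : ∀ i : Fin m, ∀ p q : Fin (n i), (p : ℕ) < l i → l i ≤ (q : ℕ) → z i q ≤ z i p)
    (hcnt : ∀ i j : Fin m, i ≤ j →
      (Finset.univ.filter (fun t : Fin (n j) => z j t = true)).card ≤
        (Finset.univ.filter (fun t : Fin (n i) => z i t = true)).card) :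
    min k (∑ i : Fin m, (Finset.univ.filter (fun t : Fin (n i) => z i t = true)).card) ≤
      ∑ i : Fin m,
        (Finset.univ.filter (fun t : Fin (n i) => (t : ℕ) < l i ∧ z i t = true)).card :=
  mwise_prefixes_contain_top_k_general (fun i => (hl i).ge) z htop2 hcnt
end

section
/- Let m ≥ 1 and k ≥ 1 be natural numbers, let n₁, …, n_m ≥ 1 be natural numbers, and set k_i = min(k, n_i) for 1 ≤ i ≤ m. Let y¹, …, y^m be binary sequences with y^i ∈ {0,1}^{n_i} such that each y^i is top k_i sorted. Then Σ_{i=1}^{m} |pref(k_i, y^i)|₁ ≥ min(k, Σ_{i=1}^{m} |y^i|₁); that is, the concatenation pref(k₁,y¹) :: … :: pref(k_m,y^m) contains the k largest elements of y¹ :: … :: y^m. -/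
/-!
Capping at `k` is subadditive, so it suffices to bound each sequence separately. For a single
sequence, the positions of the prefix and the positions of the ones are nested sets: a one outside
the prefix forces the whole prefix to consist of ones. Hence their intersection is the smaller of
the two.
-/

open Finset

theorem min_sum_le_sum_min {ι M : Type*} [AddCommMonoid M] [LinearOrder M]
    [CanonicallyOrderedAdd M] (k : M) (s : Finset ι) (f : ι → M) :
    min k (∑ i ∈ s, f i) ≤ ∑ i ∈ s, min k (f i) := by
  have := CanonicallyOrderedAdd.toIsOrderedAddMonoid (α := M)
  have min_add_le (a b : M) : min k (a + b) ≤ min k a + min k b :=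
    (min_add_distrib k a b).trans_le (min_le_right _ _)
  exact le_sum_of_subadditive (min k) (min_le_right k 0) min_add_le s f

theorem card_filter_eq_min {α : Type*} [Fintype α] (s : Finset α)
    (p : α → Prop) [DecidablePred p] (h : ∀ a ∈ s, ∀ b ∉ s, p b → p a) :
    #{a ∈ s | p a} = min #s #{a | p a} := by
  by_cases hs : ∃ b ∉ s, p b
  · obtain ⟨b, hb, hpb⟩ := hs
    have s_all : ∀ a ∈ s, p a := fun a ha => h a ha b hb hpb
    have s_subset : s ⊆ ({a | p a} : Finset α) := fun a ha => by simpa using s_all a ha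
    rw [filter_true_of_mem s_all, min_eq_left (card_le_card s_subset)]
  · push Not at hs
    have filter_subset : ({a | p a} : Finset α) ⊆ s := by grind
    have filter_eq : {a ∈ s | p a} = ({a | p a} : Finset α) := by grind
    rw [filter_eq, min_eq_right (card_le_card filter_subset)]

theorem card_prefix_ones_eq_min {n : ℕ} (t : ℕ) (y : Fin n → Bool)
    (htop : ∀ p q : Fin n, (p : ℕ) < t → t ≤ (q : ℕ) → y q ≤ y p) :
    #{j : Fin n | (j : ℕ) < t ∧ y j = true} = min t #{j | y j = true} := by
  have card_ones_le : #{j | y j = true} ≤ n := card_finset_fin_le _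
  have ones_dominate : ∀ p ∈ ({j : Fin n | (j : ℕ) < t} : Finset (Fin n)),
      ∀ q ∉ ({j : Fin n | (j : ℕ) < t} : Finset (Fin n)), y q = true → y p = true :=
    fun p hp q hq => htop p q ((mem_filter_univ p).1 hp) (by simpa using hq)
  calc #{j : Fin n | (j : ℕ) < t ∧ y j = true}
      = min #{j : Fin n | (j : ℕ) < t} #{j | y j = true} := by
        rw [← filter_filter, card_filter_eq_min _ _ ones_dominate]
    _ = min t #{j | y j = true} := by
        rw [Fin.card_filter_val_lt]
        omega

theorem oe_prefixes_contain_top_k_general {ι : Type*} [Fintype ι] (k : ℕ) (n ks : ι → ℕ)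
    (hks : ∀ i, min k (n i) ≤ ks i) (y : (i : ι) → Fin (n i) → Bool)
    (htop : ∀ i, ∀ p q : Fin (n i), (p : ℕ) < ks i → ks i ≤ (q : ℕ) → y i q ≤ y i p) :
    min k (∑ i, #{t | y i t = true}) ≤ ∑ i, #{t : Fin (n i) | (t : ℕ) < ks i ∧ y i t = true} :=
  calc min k (∑ i, #{t | y i t = true})
      ≤ ∑ i, min k #{t | y i t = true} := min_sum_le_sum_min k univ _
    _ ≤ ∑ i, #{t : Fin (n i) | (t : ℕ) < ks i ∧ y i t = true} := by
        refine sum_le_sum fun i _ => ?_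
        have card_ones_le : #{t | y i t = true} ≤ n i := card_finset_fin_le _
        have := hks i
        rw [card_prefix_ones_eq_min (ks i) (y i) (htop i)]
        omega

/-- Counting core of Theorem 2 (m-Odd-Even Selection Network): with `kᵢ = min(k, nᵢ)`,
if each binary sequence `yⁱ ∈ {0,1}^{nᵢ}` is top `kᵢ` sorted, then the prefixes
`pref(kᵢ, yⁱ)` jointly contain the `k` largest elements: the total number of ones in
the prefixes is at least `min(k, total number of ones)`. -/
theorem oe_prefixes_contain_top_k (m k : ℕ) (hm : 1 ≤ m) (hk : 1 ≤ k)
    (n : Fin m → ℕ) (hn1 : ∀ i, 1 ≤ n i)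
    (ks : Fin m → ℕ) (hks : ∀ i : Fin m, ks i = min k (n i))
    (y : (i : Fin m) → Fin (n i) → Bool)
    (htop1 : ∀ i : Fin m, ∀ p q : Fin (n i), p ≤ q → (q : ℕ) < ks i → y i q ≤ y i p)
    (htop2 : ∀ i : Fin m, ∀ p q : Fin (n i), (p : ℕ) < ks i → ks i ≤ (q : ℕ) → y i q ≤ y i p) :
    min k (∑ i : Fin m, (Finset.univ.filter (fun t : Fin (n i) => y i t = true)).card) ≤
      ∑ i : Fin m,
        (Finset.univ.filter (fun t : Fin (n i) => (t : ℕ) < ks i ∧ y i t = true)).card :=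
  oe_prefixes_contain_top_k_general k n ks (fun i => (hks i).ge) y htop2
end

section
/- Let h ≥ 1 and let p ≥ q ≥ r ≥ s be integers with p − q ≤ 2h, q − r ≤ 2h and r − s ≤ 2h. Let a₁ ≤ a₂ ≤ a₃ ≤ a₄ be the nondecreasing rearrangement of the four integers p, q + h, r + 2h, s + 3h. Then a₂ − a₁ ≤ h, a₃ − a₂ ≤ h and a₄ − a₃ ≤ h. Consequently, the integers p' = a₁, q' = a₂ − h, r' = a₃ − 2h, s' = a₄ − 3h satisfy p' ≥ q' ≥ r' ≥ s', p' − q' ≤ h, q' − r' ≤ h, r' − s' ≤ h, and p' + q' + r' + s' = p + q + r + s. -/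
/-! On the slanted positions `p, q + h, r + 2h, s + 3h` the hypotheses say that neighbours differ by
at most `h` in absolute value. A sequence with such steps cannot jump over an interval longer than
`h`, so its set of values has no gap longer than `h`, and this set does not change under sorting.
Undoing the slant turns gaps in `[0, h]` into descents in `[0, h]`. -/

variable {G : Type*} [AddCommGroup G] [LinearOrder G] [IsOrderedAddMonoid G] {n : ℕ} {h : G}

theorem exists_mem_Ioo_of_abs_sub_lt {b : Fin (n + 1) → G} {x y : G} {j k : Fin (n + 1)}
    (hstep : ∀ i : Fin n, |b i.succ - b i.castSucc| < y - x) (hxy : x < y)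
    (hj : b j ≤ x) (hk : y ≤ b k) : ∃ i, b i ∈ Set.Ioo x y := by
  by_contra! havoid
  have side (i) : b i ≤ x ∨ y ≤ b i := by
    simpa only [Set.mem_Ioo, not_and_or, not_lt] using havoid i
  have same_side (i) : b i ≤ x ↔ b 0 ≤ x := by
    induction i using Fin.induction with
    | zero => rfl
    | succ i ih =>
      rw [← ih]
      have hclose := abs_lt.mp (hstep i)
      grind [side i.succ, side i.castSucc]
  have hkx : b k ≤ x := (same_side k).mpr ((same_side j).mp hj)
  exact (hk.trans hkx).not_gt hxy

theorem sub_le_of_covBy_of_range_eq {α : Type*} [LinearOrder α] {a : α → G} {b : Fin (n + 1) → G}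
    {i j : α} (hh : 0 ≤ h) (ha : Monotone a) (hrange : Set.range a = Set.range b)
    (hstep : ∀ i : Fin n, |b i.succ - b i.castSucc| ≤ h) (hij : i ⋖ j) : a j - a i ≤ h := by
  by_contra! hgap
  obtain ⟨k, hk⟩ : a i ∈ Set.range b := hrange ▸ Set.mem_range_self i
  obtain ⟨l, hl⟩ : a j ∈ Set.range b := hrange ▸ Set.mem_range_self j
  obtain ⟨m, hm⟩ := exists_mem_Ioo_of_abs_sub_lt (fun i ↦ (hstep i).trans_lt hgap)
    (sub_pos.mp (hh.trans_lt hgap)) hk.le hl.ge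
  obtain ⟨t, ht⟩ : b m ∈ Set.range a := hrange ▸ Set.mem_range_self m
  rw [← ht] at hm
  exact hij.2 (ha.reflect_lt hm.1) (ha.reflect_lt hm.2)

theorem abs_add_sub_le_iff {u v : G} : |v + h - u| ≤ h ↔ v ≤ u ∧ u - v ≤ 2 • h := by
  rw [abs_le]
  grind

theorem slope_sort_invariant_general {c a : Fin (n + 1) → G}
    (hc : ∀ i : Fin n, c i.succ ≤ c i.castSucc)
    (hgap : ∀ i : Fin n, c i.castSucc - c i.succ ≤ 2 • h) (ha : Monotone a)
    (hperm : Finset.univ.val.map a = Finset.univ.val.map fun i ↦ c i + (i : ℕ) • h) :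
    (∀ i : Fin n, a i.succ - a i.castSucc ≤ h) ∧
    (∀ i : Fin n, a i.succ - (i.succ : ℕ) • h ≤ a i.castSucc - (i.castSucc : ℕ) • h) ∧
    (∀ i : Fin n, (a i.castSucc - (i.castSucc : ℕ) • h) - (a i.succ - (i.succ : ℕ) • h) ≤ h) ∧
    ∑ i, (a i - (i : ℕ) • h) = ∑ i, c i := by
  have hrange : Set.range a = Set.range fun i ↦ c i + (i : ℕ) • h := by
    ext y
    simpa only [Multiset.mem_map, Finset.mem_val, Finset.mem_univ, true_and, eq_iff_iff,
      Set.mem_range] using congrArg (y ∈ ·) hperm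
  have hstep (i : Fin n) :
      |(c i.succ + (i.succ : ℕ) • h) - (c i.castSucc + (i.castSucc : ℕ) • h)| ≤ h := by
    rw [Fin.val_succ, Fin.val_castSucc, succ_nsmul', ← add_assoc, add_sub_add_right_eq_sub]
    exact abs_add_sub_le_iff.mpr ⟨hc i, hgap i⟩
  have hsub (i : Fin n) : a i.succ - a i.castSucc ≤ h :=
    sub_le_of_covBy_of_range_eq ((abs_nonneg _).trans (hstep i)) ha hrange hstep
      (by simp [Fin.covBy_iff])
  have hsum : ∑ i, a i = ∑ i, (c i + (i : ℕ) • h) := congrArg Multiset.sum hperm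
  have hdescent (i : Fin n) : (a i.castSucc - (i.castSucc : ℕ) • h) -
      (a i.succ - (i.succ : ℕ) • h) = h - (a i.succ - a i.castSucc) := by
    rw [Fin.val_succ, Fin.val_castSucc, succ_nsmul]
    abel
  refine ⟨hsub, fun i ↦ sub_nonneg.mp ?_, fun i ↦ ?_, ?_⟩
  · rw [hdescent]
    exact sub_nonneg.mpr (hsub i)
  · rw [hdescent]
    exact sub_le_self h (sub_nonneg.mpr (ha i.castSucc_le_succ))
  · rw [Finset.sum_sub_distrib, hsum, Finset.sum_add_distrib, add_sub_cancel_right]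

/-- Core invariant of Lemma 4 (lma:4wsel): let `p ≥ q ≥ r ≥ s` with consecutive
differences at most `2h`, and let `a₁ ≤ a₂ ≤ a₃ ≤ a₄` be the nondecreasing
rearrangement of `p, q + h, r + 2h, s + 3h`. Then consecutive differences of the
`aᵢ` are at most `h`, and `p' = a₁`, `q' = a₂ − h`, `r' = a₃ − 2h`, `s' = a₄ − 3h`
satisfy `p' ≥ q' ≥ r' ≥ s'`, have consecutive differences at most `h`, and preserve
the total `p + q + r + s`. -/
theorem slope_sort_invariant (h p q r s a₁ a₂ a₃ a₄ : ℤ) (hh : 1 ≤ h)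
    (hpq : q ≤ p) (hqr : r ≤ q) (hrs : s ≤ r)
    (h1 : p - q ≤ 2 * h) (h2 : q - r ≤ 2 * h) (h3 : r - s ≤ 2 * h)
    (hsort : a₁ ≤ a₂ ∧ a₂ ≤ a₃ ∧ a₃ ≤ a₄)
    (hperm : ({a₁, a₂, a₃, a₄} : Multiset ℤ) = ({p, q + h, r + 2 * h, s + 3 * h} : Multiset ℤ)) :
    a₂ - a₁ ≤ h ∧ a₃ - a₂ ≤ h ∧ a₄ - a₃ ≤ h ∧
    a₂ - h ≤ a₁ ∧ a₃ - 2 * h ≤ a₂ - h ∧ a₄ - 3 * h ≤ a₃ - 2 * h ∧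
    a₁ - (a₂ - h) ≤ h ∧ (a₂ - h) - (a₃ - 2 * h) ≤ h ∧ (a₃ - 2 * h) - (a₄ - 3 * h) ≤ h ∧
    a₁ + (a₂ - h) + (a₃ - 2 * h) + (a₄ - 3 * h) = p + q + r + s := by
  have hgap : p - q ≤ 2 * h ∧ q - r ≤ 2 * h ∧ r - s ≤ 2 * h := ⟨h1, h2, h3⟩
  have := slope_sort_invariant_general (h := h) (c := ![p, q, r, s]) (a := ![a₁, a₂, a₃, a₄])
    (by simp [Fin.forall_fin_succ, *]) (by simpa [Fin.forall_fin_succ] using hgap)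
    (Fin.monotone_iff_le_succ.mpr (by simpa [Fin.forall_fin_succ] using hsort))
    (by simpa [Fin.univ_succ] using hperm)
  simpa [Fin.forall_fin_succ, Fin.sum_univ_four, -Finset.sum_sub_distrib, and_assoc] using this
end

section
/- Let K, k, l be natural numbers with K ≥ k + l and 0 ≤ l − k ≤ 2. Let ā ∈ {0,1}^{n₁} and b̄ ∈ {0,1}^{n₂} with n₁ ≥ n₂, l ≤ n₁, k ≤ n₂ and k + l ≤ n₁ + n₂, such that ā is top l full and b̄ is top k full. Let z̄ ∈ {0,1}^{n₁+n₂} be the interleaving of ā and b̄ (z_{2i−1} = a_i and z_{2i} = b_i for 1 ≤ i ≤ n₂, followed by the remaining elements a_{n₂+1}, …, a_{n₁}). Let z̄' be obtained from z̄ by replacing, for each 1 ≤ i ≤ ⌊min(K, n₁+n₂−1)/2⌋, the pair (z_{2i}, z_{2i+1}) by (max(z_{2i}, z_{2i+1}), min(z_{2i}, z_{2i+1})). Then z̄' is top (l + k) full, i.e. z'_j = 1 for all 1 ≤ j ≤ l + k. -/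
/-!
The interleaving of `a` and `b` already starts with `l + k` ones, except when `l = k + 2` and `b`
has an entry at index `k`. In that case the only suspect position, counting from zero, is
`2 * k + 1`, which holds `b k`. The combine step compares it with position `2 * k + 2`, which holds
`a (k + 1) = 1`, and so fills it. The other comparisons cannot hurt: since the larger value
goes to the earlier position of each pair, a prefix of ones stays a prefix of ones.
-/

section Interleave

variable {α : Type*}

/-- The row-major interleaving `a 0, b 0, …, a (n₂ - 1), b (n₂ - 1), a n₂, a (n₂ + 1), …` of a
sequence `a` with the first `n₂` entries of `b`. Sequences are functions on `ℕ`, so the length of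
`a` does not enter. -/
def interleave (n₂ : ℕ) (a b : ℕ → α) (j : ℕ) : α :=
  if j < 2 * n₂ then (if j % 2 = 0 then a (j / 2) else b (j / 2)) else a (j - n₂)

theorem interleave_two_mul {n₂ i : ℕ} (a b : ℕ → α) (hi : i ≤ n₂) :
    interleave n₂ a b (2 * i) = a i := by
  unfold interleave
  split_ifs
  · congr 1; omega
  · omega
  · congr 1; omega

end Interleave

/-- The first `m` entries of `x` are at least `t`. For `t = true` in `Bool` this is the notion
"top `m` full" for binary sequences. -/
def TopFull {α : Type*} [LE α] (t : α) (m : ℕ) (x : ℕ → α) : Prop :=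
  ∀ j, j < m → t ≤ x j

namespace TopFull

variable {α : Type*} [LE α] {t : α}

theorem mono {m m' : ℕ} {x : ℕ → α} (hx : TopFull t m x) (h : m' ≤ m) : TopFull t m' x :=
  fun j hj => hx j (hj.trans_le h)

theorem congr {m : ℕ} {x y : ℕ → α} (hx : TopFull t m x) (h : ∀ j, j < m → y j = x j) :
    TopFull t m y :=
  fun j hj => (hx j hj).trans_eq (h j hj).symm

theorem interleave {k l n₂ : ℕ} {a b : ℕ → α} (ha : TopFull t l a) (hb : TopFull t k b)
    (hkl : k ≤ l) (hkn : k ≤ n₂) (h : l ≤ k + 1 ∨ n₂ = k) :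
    TopFull t (l + k) (interleave n₂ a b) := by
  intro j hj
  unfold _root_.interleave
  split_ifs
  · exact ha _ (by omega)
  · exact hb _ (by omega)
  · exact ha _ (by omega)

end TopFull

/-- The sequence `z'` arises from `z` by a column of `M` comparators, the `i`-th of which puts the
pair at positions `2 * i - 1` and `2 * i` into nonincreasing order, for `1 ≤ i ≤ M`. The remaining
entries are required to be unchanged only below the length `N`. -/
structure IsPairSort {α : Type*} [Lattice α] (M N : ℕ) (z z' : ℕ → α) : Prop where
  pair : ∀ i, 1 ≤ i → i ≤ M →
    z' (2 * i - 1) = z (2 * i - 1) ⊔ z (2 * i) ∧ z' (2 * i) = z (2 * i - 1) ⊓ z (2 * i)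
  rest : ∀ j, j < N → (∀ i, 1 ≤ i → i ≤ M → j ≠ 2 * i - 1 ∧ j ≠ 2 * i) → z' j = z j

namespace IsPairSort

variable {α : Type*} [Lattice α] {t : α} {M N : ℕ} {z z' : ℕ → α}

theorem topFull {m : ℕ} (hs : IsPairSort M N z z') (hm : m ≤ N) (hz : TopFull t m z) :
    TopFull t m z' := by
  intro j hj
  by_cases hp : ∃ i, 1 ≤ i ∧ i ≤ M ∧ (j = 2 * i - 1 ∨ j = 2 * i)
  · obtain ⟨i, hi, hiM, rfl | rfl⟩ := hp
    · rw [(hs.pair i hi hiM).1]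
      exact le_sup_of_le_left (hz _ hj)
    · rw [(hs.pair i hi hiM).2]
      exact le_inf (hz _ (by omega)) (hz _ hj)
  · push Not at hp
    rw [hs.rest j (hj.trans_le hm) hp]
    exact hz j hj

theorem topFull_two_mul_add_two {i : ℕ} (hs : IsPairSort M N z z') (hiM : i < M)
    (hiN : 2 * i + 1 ≤ N) (hz : TopFull t (2 * i + 1) z) (ht : t ≤ z (2 * i + 2)) :
    TopFull t (2 * i + 2) z' := by
  intro j hj
  obtain hj | rfl : j < 2 * i + 1 ∨ j = 2 * i + 1 := by omega
  · exact hs.topFull hiN hz j hj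
  · calc t ≤ z (2 * i + 1) ⊔ z (2 * i + 2) := le_sup_of_le_right ht
      _ = z' (2 * i + 1) := (hs.pair (i + 1) i.succ_pos hiM).1.symm

end IsPairSort

theorem oe_combine_full_general {α : Type*} [Lattice α] {t : α} {K k l n₁ n₂ : ℕ}
    {a b z z' : ℕ → α} (hK : k + l ≤ K) (hkl1 : k ≤ l) (hkl2 : l ≤ k + 2)
    (hln : l ≤ n₁) (hkn : k ≤ n₂) (ha : TopFull t l a) (hb : TopFull t k b)
    (hz : ∀ j, j < n₁ + n₂ → z j = interleave n₂ a b j)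
    (hz' : IsPairSort (min K (n₁ + n₂ - 1) / 2) (n₁ + n₂) z z') :
    TopFull t (l + k) z' := by
  by_cases h : l ≤ k + 1 ∨ n₂ = k
  · have hfull : TopFull t (l + k) z :=
      (ha.interleave hb hkl1 hkn h).congr fun j hj => hz j (by omega)
    exact hz'.topFull (by omega) hfull
  · obtain rfl : l = k + 2 := by omega
    have hprefix : TopFull t (2 * k + 1) z :=
      (((ha.mono (by omega)).interleave hb k.le_succ hkn (.inl le_rfl)).mono (by omega)).congr
        fun j hj => hz j (by omega)
    have hnext : t ≤ z (2 * k + 2) := by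
      rw [hz _ (by omega), ← Nat.mul_succ, interleave_two_mul a b (by omega)]
      exact ha (k + 1) (by omega)
    exact (hz'.topFull_two_mul_add_two (by omega) (by omega) hprefix hnext).mono (by omega)

/-- Observation 3 (obs:oec2): let `a` be top `l` full and `b` top `k` full with
`0 ≤ l − k ≤ 2` and `K ≥ k + l`. Interleave them in row-major order into `z`
(0-indexed: `z_{2i} = a_i`, `z_{2i+1} = b_i` for `i < n₂`, followed by the rest of
`a`), and let `z'` be obtained by sorting, for each 1-indexed pair
`(z_{2i}, z_{2i+1})` with `1 ≤ i ≤ ⌊min(K, n₁+n₂−1)/2⌋`, that pair into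
nonincreasing order (here 0-indexed as positions `2i−1` and `2i`). Then `z'` is
top `l + k` full. -/
theorem oe_combine_full (K k l n₁ n₂ : ℕ) (a b z z' : ℕ → Bool)
    (hK : k + l ≤ K) (hkl1 : k ≤ l) (hkl2 : l ≤ k + 2)
    (hn : n₂ ≤ n₁) (hln : l ≤ n₁) (hkn : k ≤ n₂) (hsum : k + l ≤ n₁ + n₂)
    (ha : ∀ j, j < l → a j = true) (hb : ∀ j, j < k → b j = true)
    (hz : ∀ j, j < n₁ + n₂ →
      z j = if j < 2 * n₂ then (if j % 2 = 0 then a (j / 2) else b (j / 2)) else a (j - n₂))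
    (M : ℕ) (hM : M = min K (n₁ + n₂ - 1) / 2)
    (hz'pairs : ∀ i, 1 ≤ i → i ≤ M →
      z' (2 * i - 1) = max (z (2 * i - 1)) (z (2 * i)) ∧
      z' (2 * i) = min (z (2 * i - 1)) (z (2 * i)))
    (hz'rest : ∀ j, j < n₁ + n₂ → (∀ i, 1 ≤ i → i ≤ M → j ≠ 2 * i - 1 ∧ j ≠ 2 * i) →
      z' j = z j) :
    ∀ j, j < l + k → z' j = true := by
  subst hM
  exact fun j hj => top_le_iff.mp (oe_combine_full_general hK hkl1 hkl2 hln hkn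
    (fun i hi => (ha i hi).ge) (fun i hi => (hb i hi).ge) hz ⟨hz'pairs, hz'rest⟩ j hj)
end

section
/- Let k' ≥ 3 be a natural number, and let ā ∈ {0,1}^{na} and b̄ ∈ {0,1}^{nb} be binary sequences with na ≥ ⌊k'/2⌋ + 2 and nb ≥ ⌊k'/2⌋, such that ā is top (⌊k'/2⌋ + 2) sorted, b̄ is top ⌊k'/2⌋ sorted, 0 ≤ |ā|₁ − |b̄|₁ ≤ 4, and |ā|₁ + |b̄|₁ > k'. Let q = |pref(⌊k'/2⌋ + 2, ā)|₁ and r = |pref(⌊k'/2⌋, b̄)|₁. Then q + r ≥ k'. -/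
/-!
If the first `t` entries of a binary sequence dominate the others, a single `1` beyond position `t`
forces the whole prefix to consist of `1`s; so the prefix either contains every `1` of the sequence
or contributes at least `t` of them. For two such sequences, the two extreme combinations are
immediate, and in the mixed ones the bound on the imbalance `|a|₁ − |b|₁` gives enough `1`s in the
sequence whose prefix contains all of its `1`s.
-/

section BinarySequences

variable {n : ℕ}

/-- The number `|x|₁` of ones of a binary sequence `x`. -/
def onesCount (x : Fin n → Bool) : ℕ :=
  (Finset.univ.filter fun i : Fin n => x i = true).card

/-- The number `|pref(t, x)|₁` of ones among the first `t` entries of a binary sequence `x`. The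
prefix is cut out by a condition on indices, so it is the whole of `x` when `n ≤ t`. -/
def prefixOnesCount (t : ℕ) (x : Fin n → Bool) : ℕ :=
  (Finset.univ.filter fun i : Fin n => (i : ℕ) < t ∧ x i = true).card

/-- The part of "`x` is top `t` sorted" that compares the prefix of length `t` with the remaining
entries, without the order inside the prefix. -/
def TopDominates (t : ℕ) (x : Fin n → Bool) : Prop :=
  ∀ i j : Fin n, (i : ℕ) < t → t ≤ (j : ℕ) → x j ≤ x i

variable {t : ℕ} {x : Fin n → Bool}

lemma prefixOnesCount_eq_onesCount (h : ∀ j, x j = true → (j : ℕ) < t) :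
    prefixOnesCount t x = onesCount x :=
  congrArg Finset.card <| Finset.filter_congr fun j _ => and_iff_right_of_imp (h j)

lemma prefixOnesCount_eq_min (h : ∀ i : Fin n, (i : ℕ) < t → x i = true) :
    prefixOnesCount t x = min n t :=
  calc prefixOnesCount t x
      = (Finset.univ.filter fun i : Fin n => (i : ℕ) < t).card :=
        congrArg Finset.card <| Finset.filter_congr fun i _ => and_iff_left_of_imp (h i)
    _ = min n t := Fin.card_filter_val_lt

lemma TopDominates.prefixOnesCount_eq_onesCount_or_eq (hx : TopDominates t x) :
    prefixOnesCount t x = onesCount x ∨ prefixOnesCount t x = t := by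
  by_cases h : ∀ j, x j = true → (j : ℕ) < t
  · exact .inl (prefixOnesCount_eq_onesCount h)
  · push Not at h
    obtain ⟨j, hj, htj⟩ := h
    have prefix_ones (i : Fin n) (hi : (i : ℕ) < t) : x i = true := hx i j hi htj hj
    have ht : t ≤ n := htj.trans j.isLt.le
    exact .inr ((prefixOnesCount_eq_min prefix_ones).trans (min_eq_right ht))

end BinarySequences

theorem oe_merge_case_iii_general {m n s t k d e : ℕ} {a : Fin m → Bool} {b : Fin n → Bool}
    (ha : TopDominates s a) (hb : TopDominates t b)
    (hab : onesCount a ≤ onesCount b + d) (hba : onesCount b ≤ onesCount a + e)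
    (htot : k < onesCount a + onesCount b)
    (hst : k ≤ s + t) (hs : k + d ≤ 2 * s + 2) (ht : k + e ≤ 2 * t + 2) :
    k ≤ prefixOnesCount s a + prefixOnesCount t b := by
  rcases ha.prefixOnesCount_eq_onesCount_or_eq with hq | hq <;>
    rcases hb.prefixOnesCount_eq_onesCount_or_eq with hr | hr <;> rw [hq, hr]
  · exact htot.le
  · have ones_a : k + 1 ≤ 2 * onesCount a + e := by omega
    omega
  · have ones_b : k + 1 ≤ 2 * onesCount b + d := by omega
    omega
  · exact hst

/-- Case (iii) of the inductive step of the correctness lemma of the 4-Odd-Even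
Merging Network: if `a` is top `⌊k'/2⌋ + 2` sorted, `b` is top `⌊k'/2⌋` sorted,
`0 ≤ |a|₁ − |b|₁ ≤ 4` and `|a|₁ + |b|₁ > k'`, then the numbers of ones
`q = |pref(⌊k'/2⌋+2, a)|₁` and `r = |pref(⌊k'/2⌋, b)|₁` satisfy `q + r ≥ k'`. -/
theorem oe_merge_case_iii (k' na nb : ℕ) (hk' : 3 ≤ k')
    (a : Fin na → Bool) (b : Fin nb → Bool)
    (hna : k' / 2 + 2 ≤ na) (hnb : k' / 2 ≤ nb)
    (ha1 : ∀ i j : Fin na, i ≤ j → (j : ℕ) < k' / 2 + 2 → a j ≤ a i)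
    (ha2 : ∀ i j : Fin na, (i : ℕ) < k' / 2 + 2 → k' / 2 + 2 ≤ (j : ℕ) → a j ≤ a i)
    (hb1 : ∀ i j : Fin nb, i ≤ j → (j : ℕ) < k' / 2 → b j ≤ b i)
    (hb2 : ∀ i j : Fin nb, (i : ℕ) < k' / 2 → k' / 2 ≤ (j : ℕ) → b j ≤ b i)
    (hdiff1 : (Finset.univ.filter (fun i : Fin nb => b i = true)).card ≤
              (Finset.univ.filter (fun i : Fin na => a i = true)).card)
    (hdiff2 : (Finset.univ.filter (fun i : Fin na => a i = true)).card ≤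
              (Finset.univ.filter (fun i : Fin nb => b i = true)).card + 4)
    (htot : k' < (Finset.univ.filter (fun i : Fin na => a i = true)).card +
                 (Finset.univ.filter (fun i : Fin nb => b i = true)).card) :
    k' ≤ (Finset.univ.filter (fun i : Fin na => (i : ℕ) < k' / 2 + 2 ∧ a i = true)).card +
         (Finset.univ.filter (fun i : Fin nb => (i : ℕ) < k' / 2 ∧ b i = true)).card :=
  oe_merge_case_iii_general (d := 4) (e := 0) ha2 hb2 hdiff2 hdiff1 htot
    (by omega) (by omega) (by omega)
end

section
/- For every real number k ≥ 4: k·log₂k + (7/6)·k − 5 < 5k·log₂k − 6k + 6, and (15/4)·k·log₂k − (33/24)·k − 10 < (15/2)·k·log₂k − 9k + 9. -/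
/-!
Both inequalities say that the convex function `k ↦ k * logb 2 k` lies above a line: slope `43/24`
and intercept `-11/4` for the variables, slope `61/30` and intercept `-76/15` for the clauses. The
tangent at `8/5` has a larger slope than both lines and a larger value at `0`, so it lies above both
of them for every `k > 0`.
-/

section TangentLine

variable {a b x : ℝ}

theorem mul_log_add_sub_le_mul_log (ha : 0 < a) (hx : 0 < x) :
    x * Real.log a + (x - a) ≤ x * Real.log x := by
  have log_ratio_le : Real.log a - Real.log x ≤ a / x - 1 :=
    Real.log_div ha.ne' hx.ne' ▸ Real.log_le_sub_one_of_pos (div_pos ha hx)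
  have scaled : x * (Real.log a - Real.log x) ≤ a - x := by
    calc x * (Real.log a - Real.log x) ≤ x * (a / x - 1) :=
          mul_le_mul_of_nonneg_left log_ratio_le hx.le
      _ = a - x := by field_simp
  linarith

theorem mul_logb_add_sub_div_log_le_mul_logb (hb : 1 < b) (ha : 0 < a) (hx : 0 < x) :
    x * Real.logb b a + (x - a) / Real.log b ≤ x * Real.logb b x := by
  calc x * Real.logb b a + (x - a) / Real.log b
      = (x * Real.log a + (x - a)) / Real.log b := by simp only [Real.logb]; ring
    _ ≤ x * Real.log x / Real.log b :=
        div_le_div_of_nonneg_right (mul_log_add_sub_le_mul_log ha hx) (Real.log_pos hb).le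
    _ = x * Real.logb b x := mul_div_assoc _ _ _

end TangentLine

theorem two_thirds_le_logb_two_eight_fifths : 2 / 3 ≤ Real.logb 2 (8 / 5) := by
  have two_le_three_mul : 2 ≤ 3 * Real.logb 2 (8 / 5) := by
    calc (2 : ℝ) = Real.logb 2 (2 ^ 2) := by simp [Real.logb_pow]
      _ ≤ Real.logb 2 ((8 / 5) ^ 3) :=
          Real.logb_le_logb_of_le one_lt_two (by norm_num) (by norm_num)
      _ = 3 * Real.logb 2 (8 / 5) := by simp [Real.logb_pow]
  linarith

theorem inv_log_two_mem_Icc : (Real.log 2)⁻¹ ∈ Set.Icc (36 / 25) (3 / 2) := by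
  have log_two_pos : 0 < Real.log 2 := Real.log_pos one_lt_two
  constructor
  · rw [le_inv_comm₀ (by norm_num) log_two_pos]
    linarith [Real.log_two_lt_d9]
  · rw [inv_le_comm₀ log_two_pos (by norm_num)]
    linarith [Real.log_two_gt_d9]

theorem linear_le_mul_logb_two {x : ℝ} (hx : 0 < x) :
    (21 / 10) * x - 5 / 2 ≤ x * Real.logb 2 x := by
  obtain ⟨inv_lower, inv_upper⟩ := inv_log_two_mem_Icc
  calc (21 / 10) * x - 5 / 2
      ≤ x * (2 / 3) + (x * (36 / 25) - (8 / 5) * (3 / 2)) := by linarith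
    _ ≤ x * Real.logb 2 (8 / 5) + (x * (Real.log 2)⁻¹ - (8 / 5) * (Real.log 2)⁻¹) := by
        gcongr
        exact two_thirds_le_logb_two_eight_fifths
    _ = x * Real.logb 2 (8 / 5) + (x - 8 / 5) / Real.log 2 := by ring
    _ ≤ x * Real.logb 2 x :=
        mul_logb_add_sub_div_log_le_mul_logb one_lt_two (by norm_num) hx

theorem four_wise_smaller_general (k : ℝ) (hk : 0 < k) :
    k * Real.logb 2 k + (7 / 6) * k - 5 < 5 * k * Real.logb 2 k - 6 * k + 6 ∧
    (15 / 4) * k * Real.logb 2 k - (33 / 24) * k - 10 <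
      (15 / 2) * k * Real.logb 2 k - 9 * k + 9 := by
  have linear_bound := linear_le_mul_logb_two hk
  constructor <;> linarith

/-- Corollary 2 (crly:pw): for `k ≥ 4` the 4-Wise Merging Network uses fewer
variables and fewer clauses than the three 2-column Pairwise Merging Networks it
replaces. -/
theorem four_wise_smaller (k : ℝ) (hk : 4 ≤ k) :
    k * Real.logb 2 k + (7 / 6) * k - 5 < 5 * k * Real.logb 2 k - 6 * k + 6 ∧
    (15 / 4) * k * Real.logb 2 k - (33 / 24) * k - 10 <
      (15 / 2) * k * Real.logb 2 k - 9 * k + 9 :=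
  four_wise_smaller_general k (by linarith)
end

section
/- Let B be a real-valued function defined on pairs (s, k) where s ranges over powers of two with s ≥ 4 and k over nonnegative reals, satisfying B(4, k) = 0 for all k, and B(s, k) = B(s/2, k/2 + 2) + B(s/2, k/2) + k + 1 for all s > 4. Then for every power of two s ≥ 4 and every real k ≥ 0: B(s, k) ≤ k·log₂(s/2) − k − 2·log₂s + (3/2)·s + 1. -/
/-!
The claimed bound solves the recurrence exactly. Doubling `s` raises both logarithms by one, and
the recurrence is linear, so its solutions with constant value `c` at `s = 4` differ only in the
coefficient of `s`, which is `(3 + c) / 4`. The bound `3 / 2` is the case `c = 3`.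
-/

/-- A solution, for real `s > 0`, of the 4-Odd-Even merging recurrence
`F (2 * s) k = F s (k / 2 + 2) + F s (k / 2) + k + 1` with initial value `c` at `s = 4`.
It bounds the number of 2-sorters in a merging network of size `s` and selection parameter `k`. -/
noncomputable def mergeBound (c s k : ℝ) : ℝ :=
  k * Real.logb 2 (s / 2) - k - 2 * Real.logb 2 s + (3 + c) / 4 * s + 1

theorem mergeBound_four (c k : ℝ) : mergeBound c 4 k = c := by
  have logb_four_div_two : Real.logb 2 (4 / 2) = 1 := by norm_num
  have logb_four : Real.logb 2 4 = 2 := by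
    rw [show (4 : ℝ) = 2 ^ 2 by norm_num, Real.logb_pow, Real.logb_self_eq_one one_lt_two]
    norm_num
  rw [mergeBound, logb_four_div_two, logb_four]
  ring

theorem mergeBound_two_mul (c k : ℝ) {s : ℝ} (hs : s ≠ 0) :
    mergeBound c (2 * s) k =
      mergeBound c s (k / 2 + 2) + mergeBound c s (k / 2) + k + 1 := by
  have logb_half : Real.logb 2 (s / 2) = Real.logb 2 s - 1 := by
    rw [Real.logb_div hs two_ne_zero, Real.logb_self_eq_one one_lt_two]
  have logb_double : Real.logb 2 (2 * s) = 1 + Real.logb 2 s := by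
    rw [Real.logb_mul two_ne_zero hs, Real.logb_self_eq_one one_lt_two]
  simp only [mergeBound, mul_div_cancel_left₀ s two_ne_zero, logb_half, logb_double]
  ring

theorem B_bound_general (B : ℕ → ℝ → ℝ) (c : ℝ)
    (hbase : ∀ k : ℝ, 0 ≤ k → B 4 k ≤ c)
    (hrec : ∀ s : ℕ, (∃ t : ℕ, s = 2 ^ t) → 4 < s → ∀ k : ℝ, 0 ≤ k →
      B s k ≤ B (s / 2) (k / 2 + 2) + B (s / 2) (k / 2) + k + 1) :
    ∀ s : ℕ, (∃ t : ℕ, s = 2 ^ t) → 4 ≤ s → ∀ k : ℝ, 0 ≤ k → B s k ≤ mergeBound c s k := by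
  rintro _ ⟨t, rfl⟩ hs
  replace hs : 2 ≤ t := (Nat.pow_le_pow_iff_right one_lt_two).mp hs
  induction t, hs using Nat.le_induction with
  | base =>
    intro k hk
    simpa [mergeBound_four] using hbase k hk
  | succ t two_le_t ih =>
    intro k hk
    have four_lt : 4 < 2 ^ (t + 1) :=
      Nat.pow_lt_pow_right (m := 2) one_lt_two (Nat.lt_succ_of_le two_le_t)
    have half_pow : 2 ^ (t + 1) / 2 = 2 ^ t := by
      rw [pow_succ, Nat.mul_div_cancel _ two_pos]
    calc B (2 ^ (t + 1)) k
        ≤ B (2 ^ t) (k / 2 + 2) + B (2 ^ t) (k / 2) + k + 1 := by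
          simpa only [half_pow] using hrec _ ⟨t + 1, rfl⟩ four_lt k hk
      _ ≤ mergeBound c (2 ^ t : ℕ) (k / 2 + 2) + mergeBound c (2 ^ t : ℕ) (k / 2) + k + 1 := by
          gcongr
          · exact ih _ (by positivity)
          · exact ih _ (by positivity)
      _ = mergeBound c (2 * (2 ^ t : ℕ)) k := (mergeBound_two_mul c k (by positivity)).symm
      _ = mergeBound c (2 ^ (t + 1) : ℕ) k := by
          rw [pow_succ', Nat.cast_mul, Nat.cast_two]

/-- The key claim in the proof of Lemma 5 (lma:4oe_vars_cls): the recurrence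
`B(4,k) = 0`, `B(s,k) = B(s/2, k/2+2) + B(s/2, k/2) + k + 1` (for powers of two
`s > 4`) satisfies `B(s,k) ≤ k·log₂(s/2) − k − 2·log₂ s + (3/2)s + 1`. -/
theorem B_bound (B : ℕ → ℝ → ℝ)
    (hbase : ∀ k : ℝ, B 4 k = 0)
    (hrec : ∀ s : ℕ, (∃ t : ℕ, s = 2 ^ t) → 4 < s → ∀ k : ℝ, 0 ≤ k →
      B s k = B (s / 2) (k / 2 + 2) + B (s / 2) (k / 2) + k + 1) :
    ∀ s : ℕ, (∃ t : ℕ, s = 2 ^ t) → 4 ≤ s → ∀ k : ℝ, 0 ≤ k →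
      B s k ≤ k * Real.logb 2 ((s : ℝ) / 2) - k - 2 * Real.logb 2 (s : ℝ) +
        (3 / 2) * (s : ℝ) + 1 := by
  have coeff_eq : ((3 : ℝ) + 3) / 4 = 3 / 2 := by norm_num
  simpa only [mergeBound, coeff_eq] using
    B_bound_general B 3 (fun k _ ↦ (hbase k).trans_le zero_le_three)
      fun s hpow hs k hk ↦ (hrec s hpow hs k hk).le
end
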